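/- arXiv:1206.1460 — 4 statements merged into one kernel-verified Lean document; each statement's English description precedes it below -/
import Mathlib

section
/- Let d ≥ 1 and let x, y : Fin d → ℝ be two strictly increasing tuples (x i < x j and y i < y j whenever i < j). Then the Coulomb-interaction coupling term is nonpositive: ∑_{i} ∑_{j ≠ i} (x i − y i) · (1/(x i − x j) − 1/(y i − y j)) ≤ 0. -/
open Finset

/-!
The summand's second factor is antisymmetric in `(i, j)`, so adding the `(i, j)` and `(j, i)` terms
gives `(a - b) * (1 / a - 1 / b)` with `a = x i - x j` and `b = y i - y j`. Strict monotonicity makes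
`a` and `b` nonzero of the same sign, hence this equals `-(a - b) ^ 2 / (a * b) ≤ 0`. Summing over
all pairs gives twice the double sum.
-/

theorem sub_mul_one_div_sub_nonpos {a b : ℝ} (h : 0 < a * b) :
    (a - b) * (1 / a - 1 / b) ≤ 0 := by
  have ha : a ≠ 0 := left_ne_zero_of_mul h.ne'
  have hb : b ≠ 0 := right_ne_zero_of_mul h.ne'
  have key : (a - b) * (1 / a - 1 / b) = -((a - b) ^ 2 / (a * b)) := by
    field_simp
    ring
  rw [key]
  exact neg_nonpos.mpr (by positivity)

theorem coulomb_coupling_nonpos (d : ℕ) (hd : 1 ≤ d) (x y : Fin d → ℝ)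
    (hx : StrictMono x) (hy : StrictMono y) :
    ∑ i : Fin d, ∑ j ∈ Finset.univ.erase i,
      (x i - y i) * (1 / (x i - x j) - 1 / (y i - y j)) ≤ 0 := by
  -- The diagonal terms vanish because `1 / 0 = 0`, so the inner sum may run over all `j`.
  have hdiag : ∀ i : Fin d, ∑ j ∈ Finset.univ.erase i,
      (x i - y i) * (1 / (x i - x j) - 1 / (y i - y j)) =
      ∑ j, (x i - y i) * (1 / (x i - x j) - 1 / (y i - y j)) := fun i =>
    Finset.sum_erase _ (by simp)
  simp only [hdiag]
  have hpair : ∀ i j : Fin d,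
      (x i - y i) * (1 / (x i - x j) - 1 / (y i - y j)) +
        (x j - y j) * (1 / (x j - x i) - 1 / (y j - y i)) ≤ 0 := by
    intro i j
    have hanti : (x i - y i) * (1 / (x i - x j) - 1 / (y i - y j)) +
        (x j - y j) * (1 / (x j - x i) - 1 / (y j - y i)) =
        ((x i - x j) - (y i - y j)) * (1 / (x i - x j) - 1 / (y i - y j)) := by
      rw [← neg_sub (x i) (x j), ← neg_sub (y i) (y j), one_div_neg_eq_neg_one_div,
        one_div_neg_eq_neg_one_div]
      ring
    rw [hanti]
    rcases lt_trichotomy i j with h | rfl | h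
    · exact sub_mul_one_div_sub_nonpos
        (mul_pos_of_neg_of_neg (sub_neg.mpr (hx h)) (sub_neg.mpr (hy h)))
    · simp
    · exact sub_mul_one_div_sub_nonpos (mul_pos (sub_pos.mpr (hx h)) (sub_pos.mpr (hy h)))
  have hsum := Finset.sum_nonpos fun i (_ : i ∈ (Finset.univ : Finset (Fin d))) =>
    Finset.sum_nonpos fun j (_ : j ∈ (Finset.univ : Finset (Fin d))) => hpair i j
  simp only [Finset.sum_add_distrib] at hsum
  have hcomm := Finset.sum_comm (s := (Finset.univ : Finset (Fin d)))
    (t := (Finset.univ : Finset (Fin d)))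
    (f := fun i j => (x j - y j) * (1 / (x j - x i) - 1 / (y j - y i)))
  linarith
end

section
/- Let f : ℝ → ℝ be continuous and 2π-periodic (f(x + 2π) = f(x) for all x). Then, as the variance v tends to infinity, the integral of f against the centered real Gaussian measure of variance v converges to the mean of f over one period: lim_{v → ∞} ∫ f d(gaussianReal 0 v) = (1/(2π)) · ∫_{0}^{2π} f(x) dx. -/
open MeasureTheory Filter ProbabilityTheory Real NNReal

/-!
The claim says that the images of the measures `gaussianReal 0 v` on the circle `ℝ / 2πℤ` converge
weakly to the Haar probability measure as `v → ∞`. For the character `e^{inx}` the integral is the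
characteristic function `e^{-vn²/2}`, which is constantly `1` for `n = 0` and tends to `0` otherwise
(`fourier_mem_equidistributedSubmodule`). The continuous functions on the circle for which the convergence holds
form a closed subspace (`equidistributedSubmodule`, `isClosed_equidistributedSubmodule`), since all
measures involved have mass one; as trigonometric polynomials are dense in the continuous functions,
this subspace is everything.
-/

namespace GaussianEquidistribution

local instance : Fact (0 < 2 * π) := ⟨two_pi_pos⟩

lemma integrable_comp_coe (g : C(AddCircle (2 * π), ℂ)) (v : ℝ≥0) :
    Integrable (fun x : ℝ => g x) (gaussianReal 0 v) :=
  Integrable.of_bound (g.continuous.comp (AddCircle.continuous_mk' _)).aestronglyMeasurable ‖g‖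
    (Eventually.of_forall fun _ => g.norm_coe_le_norm _)

lemma integrable_haar (g : C(AddCircle (2 * π), ℂ)) :
    Integrable g (AddCircle.haarAddCircle (T := 2 * π)) :=
  Integrable.of_bound g.continuous.aestronglyMeasurable ‖g‖
    (Eventually.of_forall fun _ => g.norm_coe_le_norm _)

/-- The continuous functions on the circle whose integrals against the wrapped centered Gaussian of
variance `v` converge, as `v → ∞`, to the integral against normalized Haar measure. -/
def equidistributedSubmodule : Submodule ℂ C(AddCircle (2 * π), ℂ) where
  carrier := {g | Tendsto (fun v : ℝ≥0 => ∫ x : ℝ, g x ∂(gaussianReal 0 v)) atTop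
    (nhds (∫ x, g x ∂AddCircle.haarAddCircle))}
  zero_mem' := by simp
  add_mem' := by
    intro g h hg hh
    simp only [Set.mem_ofPred_eq, ContinuousMap.add_apply] at *
    rw [integral_add (integrable_haar g) (integrable_haar h)]
    refine (hg.add hh).congr fun v => ?_
    rw [integral_add (integrable_comp_coe g v) (integrable_comp_coe h v)]
  smul_mem' := by
    intro c g hg
    simp only [Set.mem_ofPred_eq, ContinuousMap.smul_apply, integral_smul] at *
    exact hg.const_smul c

lemma dist_integral_le {α : Type*} [MeasurableSpace α] (μ : Measure α) [IsProbabilityMeasure μ]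
    (p : α → AddCircle (2 * π)) (g h : C(AddCircle (2 * π), ℂ))
    (hg : Integrable (fun x => g (p x)) μ) (hh : Integrable (fun x => h (p x)) μ) :
    dist (∫ x, g (p x) ∂μ) (∫ x, h (p x) ∂μ) ≤ dist g h := by
  rw [dist_eq_norm, ← integral_sub hg hh]
  refine (norm_integral_le_of_norm_le_const (C := dist g h)
    (Eventually.of_forall fun x => ?_)).trans (by simp)
  rw [← dist_eq_norm]
  exact ContinuousMap.dist_apply_le_dist _

lemma isClosed_equidistributedSubmodule :
    IsClosed (equidistributedSubmodule : Set C(AddCircle (2 * π), ℂ)) := by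
  refine isClosed_of_closure_subset fun g hg => ?_
  change Tendsto _ _ _
  rw [Metric.tendsto_nhds]
  intro ε hε
  obtain ⟨h, hh, hd⟩ := Metric.mem_closure_iff.1 hg (ε / 3) (by positivity)
  change Tendsto _ _ _ at hh
  filter_upwards [Metric.tendsto_nhds.1 hh (ε / 3) (by positivity)] with v hv
  have h1 := dist_integral_le (gaussianReal 0 v) (fun x : ℝ => (x : AddCircle (2 * π))) g h
    (integrable_comp_coe g v) (integrable_comp_coe h v)
  have h2 := dist_integral_le AddCircle.haarAddCircle id h g
    (integrable_haar h) (integrable_haar g)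
  rw [dist_comm h g] at h2
  have h3 := dist_triangle4 (∫ x : ℝ, g x ∂(gaussianReal 0 v)) (∫ x : ℝ, h x ∂(gaussianReal 0 v))
    (∫ x, h x ∂AddCircle.haarAddCircle) (∫ x, g x ∂AddCircle.haarAddCircle)
  simp only [id] at h2
  linarith

lemma integral_fourier_gaussianReal (n : ℤ) (v : ℝ≥0) :
    ∫ x : ℝ, fourier n (x : AddCircle (2 * π)) ∂(gaussianReal 0 v)
      = Complex.exp (-(v * (n : ℂ) ^ 2 / 2)) := by
  have h := charFun_gaussianReal (μ := 0) (v := v) (n : ℝ)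
  rw [charFun_apply_real] at h
  convert h using 1
  · refine integral_congr_ae (Eventually.of_forall fun x => ?_)
    simp only [fourier_coe_apply]
    congr 1
    have : (π : ℂ) ≠ 0 := by exact_mod_cast Real.pi_ne_zero
    push_cast
    field_simp
  · simp

lemma integral_fourier_haar (n : ℤ) :
    ∫ x, fourier n x ∂(AddCircle.haarAddCircle (T := 2 * π)) = if n = 0 then 1 else 0 := by
  have h := congrFun (fourierCoeff_fourier (T := 2 * π) n) 0
  simpa [fourierCoeff, Pi.single_apply, eq_comm] using h

lemma fourier_mem_equidistributedSubmodule (n : ℤ) :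
    (fourier n : C(AddCircle (2 * π), ℂ)) ∈ equidistributedSubmodule := by
  change Tendsto _ _ _
  simp only [integral_fourier_gaussianReal, integral_fourier_haar]
  split_ifs with hn
  · simp [hn]
  · rw [tendsto_zero_iff_norm_tendsto_zero]
    have hn2 : (0 : ℝ) < (n : ℝ) ^ 2 / 2 := by positivity
    have h : Tendsto (fun v : ℝ≥0 => Real.exp (-((v : ℝ) * ((n : ℝ) ^ 2 / 2)))) atTop (nhds 0) :=
      tendsto_exp_neg_atTop_nhds_zero.comp
        ((NNReal.tendsto_coe_atTop.2 tendsto_id).atTop_mul_const hn2)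
    refine h.congr fun v => ?_
    have : -((v : ℂ) * (n : ℂ) ^ 2 / 2) = ((-((v : ℝ) * ((n : ℝ) ^ 2 / 2)) : ℝ) : ℂ) := by
      push_cast; ring
    rw [this, Complex.norm_exp_ofReal]

lemma equidistributedSubmodule_eq_top : equidistributedSubmodule = ⊤ := by
  rw [eq_top_iff, ← span_fourier_closure_eq_top]
  refine Submodule.topologicalClosure_minimal _ (Submodule.span_le.2 ?_)
    isClosed_equidistributedSubmodule
  rintro _ ⟨n, rfl⟩
  exact fourier_mem_equidistributedSubmodule n

end GaussianEquidistribution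

open GaussianEquidistribution in
theorem gaussian_equidistribution_mod_two_pi (f : ℝ → ℝ)
    (hf : Continuous f) (hper : ∀ x : ℝ, f (x + 2 * π) = f x) :
    Tendsto (fun v : ℝ≥0 => ∫ x, f x ∂(gaussianReal 0 v)) atTop
      (nhds ((1 / (2 * π)) * ∫ x in (0:ℝ)..(2 * π), f x)) := by
  have : Fact (0 < 2 * π) := ⟨two_pi_pos⟩
  have hper' : Function.Periodic (fun x => (f x : ℂ)) (2 * π) := fun x => by simp [hper x]
  let g : C(AddCircle (2 * π), ℂ) :=
    ⟨hper'.lift, continuous_coinduced_dom.2 (Complex.continuous_ofReal.comp hf)⟩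
  have hg : ∀ x : ℝ, g x = (f x : ℂ) := fun x => hper'.lift_coe x
  have hmem : g ∈ equidistributedSubmodule := by
    rw [equidistributedSubmodule_eq_top]; trivial
  change Tendsto (fun v : ℝ≥0 => ∫ x : ℝ, g x ∂(gaussianReal 0 v)) atTop
    (nhds (∫ x, g x ∂AddCircle.haarAddCircle)) at hmem
  have hhaar : ∫ x, g x ∂AddCircle.haarAddCircle
      = (((1 / (2 * π)) * ∫ x in (0:ℝ)..(2 * π), f x : ℝ) : ℂ) := by
    rw [AddCircle.integral_haarAddCircle, ← AddCircle.intervalIntegral_preimage (2 * π) 0]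
    simp only [hg, zero_add, intervalIntegral.integral_ofReal]
    rw [Complex.real_smul, ← Complex.ofReal_mul, one_div]
  simp only [hg, hhaar, integral_complex_ofReal] at hmem
  simpa [Function.comp_def] using (Complex.continuous_re.tendsto _).comp hmem
end

section
/- As the variance v tends to infinity, the pushforward of the centered real Gaussian measure of variance v under the map x ↦ (cos x, sin x) : ℝ → ℝ × ℝ converges weakly (in distribution) to the uniform probability measure on the unit circle, i.e. to the pushforward under θ ↦ (cos θ, sin θ) of the normalized Lebesgue measure (1/(2π))·Leb on the interval [0, 2π]. -/
/-!
The coordinates on the circle turn a bounded continuous `f` on the plane into a continuous function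
`θ ↦ f (cos θ, sin θ)` on `AddCircle (2π)`, so both integrals become integrals of this function
against probability measures on `ℝ`: the Gaussian, and the normalized Lebesgue measure on `[0, 2π]`.

For the character `θ ↦ exp (i n θ)` the Gaussian integral is the characteristic function
`exp (-v n² / 2)`, which tends to `0` as `v → ∞` unless `n = 0`; this is the integral of the
character over a period (`tendsto_integral_fourier`). Convergence passes to linear combinations,
and to uniform limits because all measures involved are probability measures
(`tendsto_integral_addCircle`). By Stone–Weierstrass the characters span a dense subspace of
`C(AddCircle (2π), ℂ)`, which gives the convergence for every continuous function on the circle.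
-/

open MeasureTheory Filter ProbabilityTheory Real NNReal BoundedContinuousFunction

instance fact_two_pi_pos : Fact (0 < 2 * π) := ⟨by positivity⟩

/-- The normalized Lebesgue measure on `[0, 2π]`. -/
noncomputable def uniformPeriod : Measure ℝ :=
  (ENNReal.ofReal (2 * π))⁻¹ • volume.restrict (Set.Icc (0:ℝ) (2 * π))

instance isProbabilityMeasure_uniformPeriod : IsProbabilityMeasure uniformPeriod := by
  constructor
  have h : ENNReal.ofReal (2 * π) ≠ 0 := by
    simpa using Real.pi_pos
  simp only [uniformPeriod, Measure.smul_apply, Measure.restrict_apply_univ, Real.volume_Icc,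
    sub_zero, smul_eq_mul]
  exact ENNReal.inv_mul_cancel h ENNReal.ofReal_ne_top

lemma fourier_two_pi_coe (n : ℤ) (x : ℝ) :
    fourier n (x : AddCircle (2 * π)) = Complex.exp (n * x * Complex.I) := by
  rw [fourier_coe_apply]
  congr 1
  have : (π : ℂ) ≠ 0 := by exact_mod_cast Real.pi_ne_zero
  push_cast
  field_simp

lemma integral_fourier_uniformPeriod {n : ℤ} (hn : n ≠ 0) :
    ∫ x : ℝ, fourier n (x : AddCircle (2 * π)) ∂uniformPeriod = 0 := by
  have hc : (n : ℂ) * Complex.I ≠ 0 := by simp [hn]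
  simp only [fourier_two_pi_coe]
  rw [uniformPeriod, integral_smul_measure, integral_Icc_eq_integral_Ioc,
    ← intervalIntegral.integral_of_le (by positivity)]
  have h1 : ∀ x : ℝ, (n : ℂ) * x * Complex.I = n * Complex.I * x := fun x => by ring
  simp only [h1]
  rw [integral_exp_mul_complex hc]
  have h2 : Complex.exp (n * Complex.I * ((2 * π : ℝ) : ℂ)) = 1 := by
    rw [Complex.exp_eq_one_iff]
    exact ⟨n, by push_cast; ring⟩
  rw [h2]
  simp

lemma tendsto_integral_fourier (n : ℤ) :
    Tendsto (fun v : ℝ≥0 => ∫ x : ℝ, fourier n (x : AddCircle (2 * π)) ∂(gaussianReal 0 v))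
      atTop (nhds (∫ x : ℝ, fourier n (x : AddCircle (2 * π)) ∂uniformPeriod)) := by
  rcases eq_or_ne n 0 with rfl | hn
  · simp
  · rw [integral_fourier_uniformPeriod hn]
    have key : ∀ v : ℝ≥0, ∫ x : ℝ, fourier n (x : AddCircle (2 * π)) ∂(gaussianReal 0 v)
        = ((Real.exp (-((v : ℝ) * ((n : ℝ) ^ 2 / 2))) : ℝ) : ℂ) := by
      intro v
      have h := charFun_gaussianReal (μ := 0) (v := v) (n : ℝ)
      rw [charFun_apply_real] at h
      simp only [fourier_two_pi_coe]
      push_cast at h ⊢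
      rw [h]
      congr 1
      ring
    simp only [key]
    rw [← Complex.ofReal_zero]
    refine (Complex.continuous_ofReal.tendsto 0).comp ?_
    refine Real.tendsto_exp_neg_atTop_nhds_zero.comp ?_
    exact (NNReal.tendsto_coe_atTop.2 tendsto_id).atTop_mul_const (by positivity)

lemma integrable_addCircle (g : C(AddCircle (2 * π), ℂ)) (μ : Measure ℝ) [IsProbabilityMeasure μ] :
    Integrable (fun x : ℝ => g (x : AddCircle (2 * π))) μ := by
  refine Integrable.of_bound (C := ‖g‖) ?_ (Eventually.of_forall fun x => g.norm_coe_le_norm _)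
  exact (g.continuous.comp (AddCircle.continuous_mk' _)).aestronglyMeasurable

/-- Integration against a probability measure is 1-Lipschitz for the uniform distance, uniformly in
the measure; this is what lets convergence pass to uniform limits of test functions. -/
lemma dist_integral_addCircle_le (g h : C(AddCircle (2 * π), ℂ)) (μ : Measure ℝ)
    [IsProbabilityMeasure μ] :
    dist (∫ x : ℝ, g (x : AddCircle (2 * π)) ∂μ) (∫ x : ℝ, h (x : AddCircle (2 * π)) ∂μ)
      ≤ dist g h := by
  rw [dist_eq_norm, ← integral_sub (integrable_addCircle g μ) (integrable_addCircle h μ)]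
  refine (norm_integral_le_of_norm_le_const (C := dist g h)
    (Eventually.of_forall fun x => ?_)).trans (by simp)
  rw [← dist_eq_norm]
  exact ContinuousMap.dist_apply_le_dist _

lemma tendsto_integral_addCircle (g : C(AddCircle (2 * π), ℂ)) :
    Tendsto (fun v : ℝ≥0 => ∫ x : ℝ, g (x : AddCircle (2 * π)) ∂(gaussianReal 0 v))
      atTop (nhds (∫ x : ℝ, g (x : AddCircle (2 * π)) ∂uniformPeriod)) := by
  have hspan : ∀ h ∈ Submodule.span ℂ (Set.range (@fourier (2 * π))),
      Tendsto (fun v : ℝ≥0 => ∫ x : ℝ, h (x : AddCircle (2 * π)) ∂(gaussianReal 0 v))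
        atTop (nhds (∫ x : ℝ, h (x : AddCircle (2 * π)) ∂uniformPeriod)) := by
    intro h hh
    induction hh using Submodule.span_induction with
    | mem h hh =>
      obtain ⟨n, rfl⟩ := hh
      exact tendsto_integral_fourier n
    | zero => simp
    | add a b _ _ ha hb =>
      simp only [ContinuousMap.add_apply]
      rw [integral_add (integrable_addCircle a _) (integrable_addCircle b _)]
      refine (ha.add hb).congr fun v => ?_
      rw [integral_add (integrable_addCircle a _) (integrable_addCircle b _)]
    | smul c a _ ha =>
      simp only [ContinuousMap.smul_apply, integral_smul]
      exact ha.const_smul c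
  have hg : g ∈ closure (Submodule.span ℂ (Set.range (@fourier (2 * π))) :
      Set C(AddCircle (2 * π), ℂ)) := by
    rw [← Submodule.topologicalClosure_coe, span_fourier_closure_eq_top]
    trivial
  rw [Metric.tendsto_nhds]
  intro ε hε
  obtain ⟨h, hh, hgh⟩ := Metric.mem_closure_iff.1 hg (ε / 3) (by positivity)
  filter_upwards [Metric.tendsto_nhds.1 (hspan h hh) (ε / 3) (by positivity)] with v hv
  have h1 := dist_integral_addCircle_le g h (gaussianReal 0 v)
  have h2 := dist_integral_addCircle_le h g uniformPeriod
  rw [dist_comm h g] at h2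
  refine (dist_triangle4 _ (∫ x : ℝ, h (x : AddCircle (2 * π)) ∂(gaussianReal 0 v))
    (∫ x : ℝ, h (x : AddCircle (2 * π)) ∂uniformPeriod) _).trans_lt ?_
  linarith

theorem gaussian_circle_pushforward_weak_limit :
    ∀ f : ℝ × ℝ →ᵇ ℝ,
      Tendsto
        (fun v : ℝ≥0 =>
          ∫ z, f z ∂(Measure.map (fun x : ℝ => (Real.cos x, Real.sin x)) (gaussianReal 0 v)))
        atTop
        (nhds (∫ z, f z
          ∂(Measure.map (fun θ : ℝ => (Real.cos θ, Real.sin θ))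
            ((ENNReal.ofReal (2 * π))⁻¹ • volume.restrict (Set.Icc (0:ℝ) (2 * π)))))) := by
  intro f
  have hmap : ∀ μ : Measure ℝ,
      ∫ z, f z ∂(Measure.map (fun x : ℝ => (Real.cos x, Real.sin x)) μ)
        = ∫ x, f (Real.cos x, Real.sin x) ∂μ := fun μ =>
    integral_map (by fun_prop) f.continuous.aestronglyMeasurable
  simp only [hmap]
  -- `Real.Angle` is by definition `AddCircle (2 * π)`, so its `cos` and `sin` live on the circle.
  let g : C(AddCircle (2 * π), ℂ) :=
    { toFun := fun θ => ((f (Real.Angle.cos θ, Real.Angle.sin θ) : ℝ) : ℂ)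
      continuous_toFun := Complex.continuous_ofReal.comp
        (f.continuous.comp (Real.Angle.continuous_cos.prodMk Real.Angle.continuous_sin)) }
  have hg : ∀ x : ℝ, g (x : AddCircle (2 * π)) = ((f (Real.cos x, Real.sin x) : ℝ) : ℂ) :=
    fun _ => rfl
  have h := (Complex.continuous_re.tendsto _).comp (tendsto_integral_addCircle g)
  simp only [Function.comp_def, hg, integral_complex_ofReal, Complex.ofReal_re] at h
  exact h
end

section
/- Let A and B be Hermitian d×d complex matrices, and let μ(A), μ(B) : Fin d → ℝ denote their eigenvalues listed in nondecreasing order (with multiplicity). Then the Hoffman–Wielandt inequality holds: ∑_{i} (μ(A) i − μ(B) i)² ≤ ∑_{i,j} ‖A i j − B i j‖², where the right-hand side is the squared Frobenius norm of A − B. -/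
/-!
Diagonalise `A = U D Uᴴ` and `B = V E Vᴴ` with `D = diag a`, `E = diag b`, and put `W = Uᴴ V`.
Unitary invariance of the Frobenius norm gives
`‖A - B‖² = ‖Uᴴ (A - B) V‖² = ‖D W - W E‖² = ∑ i j, |W i j|² (a i - b j)²`.
The matrix `|W i j|²` is doubly stochastic, so by Birkhoff's theorem the right-hand side is a
convex combination, over permutations `σ`, of the numbers `∑ i, (a i - b (σ i))²`. By the
rearrangement inequality each of these is at least the sum of squared differences of the two
sequences sorted in increasing order.
-/

open Finset Matrix

/-- The squared Frobenius norm as a trace, the form in which unitary invariance is visible. -/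
lemma sum_norm_sq_eq_trace {d : ℕ} (M : Matrix (Fin d) (Fin d) ℂ) :
    ((∑ i, ∑ j, ‖M i j‖ ^ 2 : ℝ) : ℂ) = (Mᴴ * M).trace := by
  rw [Finset.sum_comm]
  simp [Matrix.trace, Matrix.mul_apply, Complex.conj_mul']

lemma sum_norm_sq_unitary_conj {d : ℕ} (M U V : Matrix (Fin d) (Fin d) ℂ)
    (hU : U * Uᴴ = 1) (hV : V * Vᴴ = 1) :
    ∑ i, ∑ j, ‖(Uᴴ * M * V) i j‖ ^ 2 = ∑ i, ∑ j, ‖M i j‖ ^ 2 := by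
  apply Complex.ofReal_injective
  rw [sum_norm_sq_eq_trace, sum_norm_sq_eq_trace]
  have h : (Uᴴ * M * V)ᴴ * (Uᴴ * M * V) = Vᴴ * (Mᴴ * (U * Uᴴ) * M * V) := by
    simp only [conjTranspose_mul, conjTranspose_conjTranspose, Matrix.mul_assoc]
  rw [h, Matrix.trace_mul_comm, hU, Matrix.mul_one, Matrix.mul_assoc, hV, Matrix.mul_one]

lemma normSq_mem_doublyStochastic {d : ℕ} (W : Matrix (Fin d) (Fin d) ℂ)
    (h₁ : W * Wᴴ = 1) (h₂ : Wᴴ * W = 1) :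
    (Matrix.of fun i j => ‖W i j‖ ^ 2) ∈ doublyStochastic ℝ (Fin d) := by
  rw [mem_doublyStochastic_iff_sum]
  refine ⟨fun i j => by simp, fun i => ?_, fun j => ?_⟩
  · have := congrFun (congrFun h₁ i) i
    apply Complex.ofReal_injective
    simpa [Matrix.mul_apply, Complex.mul_conj'] using this
  · have := congrFun (congrFun h₂ j) j
    apply Complex.ofReal_injective
    simpa [Matrix.mul_apply, Complex.conj_mul'] using this

/-- Rearrangement: among all ways to match the values of `a` with those of `b`, matching them in
sorted order minimises the sum of squared differences. -/
lemma sum_sq_sort_le {d : ℕ} (a b : Fin d → ℝ) (σ : Equiv.Perm (Fin d)) :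
    ∑ i, ((a ∘ Tuple.sort a) i - (b ∘ Tuple.sort b) i) ^ 2 ≤ ∑ i, (a i - b (σ i)) ^ 2 := by
  have hmono : Monovary (a ∘ Tuple.sort a) (b ∘ Tuple.sort b) :=
    (Tuple.monotone_sort a).monovary (Tuple.monotone_sort b)
  have key := hmono.sum_mul_comp_perm_le_sum_mul
    (σ := (Tuple.sort a).trans (σ.trans (Tuple.sort b).symm))
  have h₁ : ∑ i, a (Tuple.sort a i) * b (σ (Tuple.sort a i)) = ∑ i, a i * b (σ i) :=
    Equiv.sum_comp (Tuple.sort a) fun i => a i * b (σ i)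
  have h₂ : ∑ i, a (Tuple.sort a i) ^ 2 = ∑ i, a i ^ 2 :=
    Equiv.sum_comp (Tuple.sort a) fun i => a i ^ 2
  have h₃ : ∑ i, b (Tuple.sort b i) ^ 2 = ∑ i, b i ^ 2 :=
    Equiv.sum_comp (Tuple.sort b) fun i => b i ^ 2
  have h₄ : ∑ i, b (σ i) ^ 2 = ∑ i, b i ^ 2 := Equiv.sum_comp σ fun i => b i ^ 2
  simp only [Function.comp_apply, Equiv.trans_apply, Equiv.apply_symm_apply] at key
  have e (x y : Fin d → ℝ) :
      ∑ i, (x i - y i) ^ 2 = ∑ i, x i ^ 2 - 2 * ∑ i, x i * y i + ∑ i, y i ^ 2 := by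
    rw [Finset.mul_sum, ← Finset.sum_sub_distrib, ← Finset.sum_add_distrib]
    exact Finset.sum_congr rfl fun i _ => by ring
  rw [e, e a fun i => b (σ i)]
  simp only [Function.comp_apply]
  linarith

lemma sum_sq_sort_le_of_doublyStochastic {d : ℕ} (a b : Fin d → ℝ)
    (P : Matrix (Fin d) (Fin d) ℝ) (hP : P ∈ doublyStochastic ℝ (Fin d)) :
    ∑ i, ((a ∘ Tuple.sort a) i - (b ∘ Tuple.sort b) i) ^ 2
      ≤ ∑ i, ∑ j, P i j * (a i - b j) ^ 2 := by
  obtain ⟨w, hw, hw1, rfl⟩ := exists_eq_sum_perm_of_mem_doublyStochastic hP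
  have h : ∑ i, ∑ j, (∑ σ, w σ • σ.permMatrix ℝ) i j * (a i - b j) ^ 2
      = ∑ σ, w σ * ∑ i, (a i - b (σ i)) ^ 2 := by
    simp only [Matrix.sum_apply, Finset.sum_mul, Matrix.smul_apply, smul_eq_mul,
      Equiv.Perm.permMatrix, Equiv.toPEquiv, PEquiv.toMatrix_apply]
    simp_rw [Finset.sum_comm (s := (univ : Finset (Fin d)))
      (t := (univ : Finset (Equiv.Perm (Fin d))))]
    simp [Finset.mul_sum]
  rw [h]
  calc _ = ∑ σ, w σ * ∑ i, ((a ∘ Tuple.sort a) i - (b ∘ Tuple.sort b) i) ^ 2 := by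
        rw [← Finset.sum_mul, hw1, one_mul]
    _ ≤ _ := Finset.sum_le_sum fun σ _ =>
        mul_le_mul_of_nonneg_left (sum_sq_sort_le a b σ) (hw σ)

theorem hoffman_wielandt (d : ℕ) (hd : 1 ≤ d) (A B : Matrix (Fin d) (Fin d) ℂ)
    (hA : A.IsHermitian) (hB : B.IsHermitian) :
    ∑ i : Fin d,
        ((hA.eigenvalues ∘ Tuple.sort hA.eigenvalues) i
          - (hB.eigenvalues ∘ Tuple.sort hB.eigenvalues) i) ^ 2
      ≤ ∑ i : Fin d, ∑ j : Fin d, ‖A i j - B i j‖ ^ 2 := by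
  obtain ⟨U, hU₁, hU₂, hUA⟩ : ∃ U : Matrix (Fin d) (Fin d) ℂ, U * Uᴴ = 1 ∧ Uᴴ * U = 1 ∧
      A = U * diagonal (fun i => (hA.eigenvalues i : ℂ)) * Uᴴ :=
    ⟨hA.eigenvectorUnitary, Unitary.coe_mul_star_self _, Unitary.coe_star_mul_self _,
      hA.spectral_theorem⟩
  obtain ⟨V, hV₁, hV₂, hVB⟩ : ∃ V : Matrix (Fin d) (Fin d) ℂ, V * Vᴴ = 1 ∧ Vᴴ * V = 1 ∧
      B = V * diagonal (fun i => (hB.eigenvalues i : ℂ)) * Vᴴ :=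
    ⟨hB.eigenvectorUnitary, Unitary.coe_mul_star_self _, Unitary.coe_star_mul_self _,
      hB.spectral_theorem⟩
  generalize hA.eigenvalues = a at *
  generalize hB.eigenvalues = b at *
  have hconj : Uᴴ * (A - B) * V = diagonal (fun i => (a i : ℂ)) * (Uᴴ * V)
      - (Uᴴ * V) * diagonal (fun i => (b i : ℂ)) := by
    have h₁ : Uᴴ * A = diagonal (fun i => (a i : ℂ)) * Uᴴ := by
      rw [hUA, ← Matrix.mul_assoc, ← Matrix.mul_assoc, hU₂, Matrix.one_mul]
    have h₂ : B * V = V * diagonal (fun i => (b i : ℂ)) := by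
      rw [hVB, Matrix.mul_assoc, hV₂, Matrix.mul_one]
    rw [Matrix.mul_sub, Matrix.sub_mul, h₁, Matrix.mul_assoc Uᴴ B V, h₂]
    simp only [Matrix.mul_assoc]
  have hW₁ : (Uᴴ * V) * (Uᴴ * V)ᴴ = 1 := by
    rw [conjTranspose_mul, conjTranspose_conjTranspose, Matrix.mul_assoc, ← Matrix.mul_assoc V,
      hV₁, Matrix.one_mul, hU₂]
  have hW₂ : (Uᴴ * V)ᴴ * (Uᴴ * V) = 1 := by
    rw [conjTranspose_mul, conjTranspose_conjTranspose, Matrix.mul_assoc, ← Matrix.mul_assoc U,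
      hU₁, Matrix.one_mul, hV₂]
  have hfrob := sum_norm_sq_unitary_conj (A - B) U V hU₁ hV₁
  rw [hconj] at hfrob
  simp only [Matrix.sub_apply _ _] at hfrob
  rw [← hfrob]
  refine (sum_sq_sort_le_of_doublyStochastic a b _
    (normSq_mem_doublyStochastic (Uᴴ * V) hW₁ hW₂)).trans_eq ?_
  refine Finset.sum_congr rfl fun i _ => Finset.sum_congr rfl fun j _ => ?_
  have h : (a i : ℂ) * (Uᴴ * V) i j - (Uᴴ * V) i j * (b j : ℂ)
      = (Uᴴ * V) i j * ((a i - b j : ℝ) : ℂ) := by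
    push_cast; ring
  rw [diagonal_mul, mul_diagonal, h, norm_mul, mul_pow, Complex.norm_real, Real.norm_eq_abs,
    sq_abs, Matrix.of_apply]
end
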